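/- Let 𝒫 ⊂ 𝒟 be a mutually absolutely continuous set of laws with Lebesgue density on ℝ^d. Then the closed fork-convex hull of the set of i.i.d. laws 𝒫^∞ contains every independent-product law ⨂{P_t} with all marginals P_t in 𝒫; that is, cl-f-conv(𝒫^∞) ⊇ ⨂𝒫 ⊇ 𝒫^∞. -/

import Mathlib

open MeasureTheory ProbabilityTheory Filter Finset Matrix
open scoped Classical

noncomputable section

namespace SeqTest

/-- `ℝ^d`. -/
abbrev RV (d : ℕ) := Fin d → ℝ

/-- The sequence space `Ω = (ℝ^d)^ℕ`. -/
abbrev Seq (d : ℕ) := ℕ → RV d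

variable (d : ℕ)


/-- The first `t` coordinates of a sequence. -/
def prefixMap (t : ℕ) : Seq d → (Fin t → RV d) := fun ω s => ω s

/-- The law of the first `t` coordinates under a sequential law `μ`. -/
def prefixLaw (μ : Measure (Seq d)) (t : ℕ) : Measure (Fin t → RV d) :=
  μ.map (prefixMap d t)

/-- The natural filtration of the coordinate process: `ℱ t = σ(X_0, …, X_{t-1})`. -/
def F : Filtration ℕ (inferInstance : MeasurableSpace (Seq d)) where
  seq t := ⨆ s ∈ Finset.range t, MeasurableSpace.comap (fun ω : Seq d => ω s) inferInstance
  mono' := by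
    intro i j hij
    exact biSup_mono fun s hs => Finset.mem_range.mpr
      (lt_of_lt_of_le (Finset.mem_range.mp hs) hij)
  le' := by
    intro t
    refine iSup₂_le fun s _ => ?_
    exact measurable_iff_comap_le.mp (measurable_pi_apply s)

/-- Local absolute continuity of sequential laws: every prefix law of `μ` is
absolutely continuous w.r.t. the corresponding prefix law of `Γ`. -/
def LocAC (μ Γ : Measure (Seq d)) : Prop := ∀ t, prefixLaw d μ t ≪ prefixLaw d Γ t

/-- The density (likelihood-ratio) process `Z_t^μ = d(μ|_t)/d(Γ|_t)` evaluated along the path. -/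
def Z (μ Γ : Measure (Seq d)) (t : ℕ) (ω : Seq d) : ℝ :=
  ((prefixLaw d μ t).rnDeriv (prefixLaw d Γ t) (prefixMap d t ω)).toReal

/-- The standard Gaussian measure on `ℝ^d`. -/
def stdGaussian : Measure (RV d) := Measure.pi fun _ => gaussianReal 0 1

/-- `Γ` is the law of an i.i.d. sequence of standard Gaussians: characterized through its
finite-dimensional rectangle probabilities. -/
def IsGamma (Γ : Measure (Seq d)) : Prop :=
  IsProbabilityMeasure Γ ∧
    ∀ (t : ℕ) (A : Fin t → Set (RV d)), (∀ s, MeasurableSet (A s)) →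
      prefixLaw d Γ t (Set.univ.pi A) = ∏ s, stdGaussian d (A s)

/-- `M` is a nonnegative supermartingale for the sequential law `μ`
(w.r.t. the natural filtration). -/
def IsNSM (μ : Measure (Seq d)) (M : ℕ → Seq d → ℝ) : Prop :=
  (∀ t ω, 0 ≤ M t ω) ∧ Supermartingale M (F d) μ

/-- `M` is a nonnegative martingale for the sequential law `μ`. -/
def IsNM (μ : Measure (Seq d)) (M : ℕ → Seq d → ℝ) : Prop :=
  (∀ t ω, 0 ≤ M t ω) ∧ Martingale M (F d) μ


/-- `R` is the `(s,h)`-fork-convex combination of `P` with `Q` (relative to the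
reference law `Γ`), described through its density process. -/
def IsFCC (Γ P Q : Measure (Seq d)) (s : ℕ) (h : Seq d → ℝ) (R : Measure (Seq d)) : Prop :=
  IsProbabilityMeasure P ∧ IsProbabilityMeasure Q ∧ LocAC d P Γ ∧ LocAC d Q Γ ∧
  Measurable[F d s] h ∧ (∀ ω, h ω ∈ Set.Icc (0 : ℝ) 1) ∧
  Γ {ω | h ω < 1 ∧ Z d Q Γ s ω = 0} = 0 ∧
  IsProbabilityMeasure R ∧ LocAC d R Γ ∧
  ∀ t : ℕ, (fun ω => Z d R Γ t ω) =ᵐ[Γ]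
    (fun ω => if t ≤ s then Z d P Γ t ω
      else h ω * Z d P Γ t ω + (1 - h ω) * Z d Q Γ t ω * (Z d P Γ s ω / Z d Q Γ s ω))

/-- A set of sequential laws is fork-convex if it is closed under fork-convex combinations. -/
def IsForkConvex (Γ : Measure (Seq d)) (S : Set (Measure (Seq d))) : Prop :=
  ∀ P ∈ S, ∀ Q ∈ S, ∀ (s : ℕ) (h : Seq d → ℝ) (R : Measure (Seq d)),
    IsFCC d Γ P Q s h R → R ∈ S

/-- The fork-convex hull: the smallest fork-convex set containing `𝔓`. -/
def fconv (Γ : Measure (Seq d)) (𝔓 : Set (Measure (Seq d))) : Set (Measure (Seq d)) :=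
  ⋂₀ {S | 𝔓 ⊆ S ∧ IsForkConvex d Γ S}

/-- Convergence of sequential laws: the density processes converge in `L¹(Γ)` at every fixed time. -/
def TendstoLocL1 (Γ : Measure (Seq d)) (Pn : ℕ → Measure (Seq d)) (P : Measure (Seq d)) : Prop :=
  ∀ t, Tendsto (fun n => ∫ ω, |Z d (Pn n) Γ t ω - Z d P Γ t ω| ∂Γ) atTop (nhds 0)

/-- The closed fork-convex hull: the closure of the fork-convex hull under local `L¹(Γ)`
convergence of density processes. -/
def clfconv (Γ : Measure (Seq d)) (𝔓 : Set (Measure (Seq d))) : Set (Measure (Seq d)) :=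
  {P | IsProbabilityMeasure P ∧ LocAC d P Γ ∧
    ∃ Pn : ℕ → Measure (Seq d), (∀ n, Pn n ∈ fconv d Γ 𝔓) ∧ TendstoLocL1 d Γ Pn P}

/-- `μ` is the law of an i.i.d. sequence with marginal `P`. -/
def IsIIDLaw (μ : Measure (Seq d)) (P : Measure (RV d)) : Prop :=
  IsProbabilityMeasure μ ∧
    ∀ (t : ℕ) (A : Fin t → Set (RV d)), (∀ s, MeasurableSet (A s)) →
      prefixLaw d μ t (Set.univ.pi A) = ∏ s, P (A s)

/-- `μ` is the law of an independent sequence with marginals `Ps 0, Ps 1, …`. -/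
def IsProductLaw (μ : Measure (Seq d)) (Ps : ℕ → Measure (RV d)) : Prop :=
  IsProbabilityMeasure μ ∧
    ∀ (t : ℕ) (A : Fin t → Set (RV d)), (∀ s, MeasurableSet (A s)) →
      prefixLaw d μ t (Set.univ.pi A) = ∏ s : Fin t, Ps s (A s)

/-- The set of i.i.d. sequential laws with marginals in `PP`. -/
def iidLaws (PP : Set (Measure (RV d))) : Set (Measure (Seq d)) :=
  {μ | ∃ P ∈ PP, IsIIDLaw d μ P}

/-- The set of independent-product sequential laws with all marginals in `PP`. -/
def productLaws (PP : Set (Measure (RV d))) : Set (Measure (Seq d)) :=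
  {μ | ∃ Ps : ℕ → Measure (RV d), (∀ t, Ps t ∈ PP) ∧ IsProductLaw d μ Ps}




/-- The density of the `d`-dimensional Gaussian with mean `m` and covariance matrix `S`. -/
def gaussDensityFn (m : RV d) (S : Matrix (Fin d) (Fin d) ℝ) (x : RV d) : ℝ :=
  (2 * Real.pi) ^ (-(d : ℝ) / 2) * S.det ^ (-(1 : ℝ) / 2) *
    Real.exp (-(1 / 2) * ((x - m) ⬝ᵥ (S⁻¹ *ᵥ (x - m))))

/-- A finite mixture of nondegenerate Gaussian densities. -/
def IsGaussianMixture (g : RV d → ℝ) : Prop :=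
  ∃ (k : ℕ) (α : Fin k → ℝ) (ms : Fin k → RV d) (Ss : Fin k → Matrix (Fin d) (Fin d) ℝ),
    (∀ i, 0 ≤ α i) ∧ (∑ i, α i = 1) ∧ (∀ i, (Ss i).PosDef) ∧
    g = fun x => ∑ i, α i * gaussDensityFn d (ms i) (Ss i) x

/-- A log-concave nonnegative function on `ℝ^d`. -/
def IsLogConcaveFn (p : RV d → ℝ) : Prop :=
  (∀ x, 0 ≤ p x) ∧
    ∀ (x y : RV d) (l : ℝ), 0 ≤ l → l ≤ 1 →
      p x ^ l * p y ^ (1 - l) ≤ p (l • x + (1 - l) • y)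

/-- A log-concave probability density on `ℝ^d`. -/
def IsLogConcaveDensity (p : RV d → ℝ) : Prop :=
  Measurable p ∧ IsLogConcaveFn d p ∧ ∫ x, p x = 1

/-- The set `𝓛` of laws on `ℝ^d` with a log-concave Lebesgue density. -/
def logConcaveLaws : Set (Measure (RV d)) :=
  {P | IsProbabilityMeasure P ∧ ∃ p : RV d → ℝ, Measurable p ∧ IsLogConcaveFn d p ∧
    P = volume.withDensity fun x => ENNReal.ofReal (p x)}

/-- The set `𝒢` of nondegenerate Gaussian laws on `ℝ^d`. -/
def gaussianLaws : Set (Measure (RV d)) :=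
  {P | ∃ (m : RV d) (S : Matrix (Fin d) (Fin d) ℝ), S.PosDef ∧
    P = volume.withDensity fun x => ENNReal.ofReal (gaussDensityFn d m S x)}

/-- An estimator sequence: a measurable family of (strictly positive) predictable
probability density estimates. -/
def IsEstimatorSeq (E : (t : ℕ) → (Fin t → RV d) → RV d → ℝ) : Prop :=
  (∀ t, Measurable fun q : (Fin t → RV d) × RV d => E t q.1 q.2) ∧
  (∀ t h x, 0 < E t h x) ∧ (∀ t h, ∫ x, E t h x = 1)

/-- The universal likelihood ratio (ULR) process. Time `t` corresponds to having observed
the `t` samples `ω 0, …, ω (t-1)`. -/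
def ULR (E : (t : ℕ) → (Fin t → RV d) → RV d → ℝ) (t : ℕ) (ω : Seq d) : ℝ :=
  if t ≤ d then 1 else
    (∏ j ∈ Finset.Ico d t, E j (fun i : Fin j => ω i) (ω j)) /
      ⨆ p : {p : RV d → ℝ // IsLogConcaveDensity d p}, ∏ j ∈ Finset.Ico d t, p.1 (ω j)

/-- The prediction (cumulative log-loss) regret of the estimator sequence `E` relative to
the density of `P`. -/
def regret (P : Measure (RV d)) (E : (t : ℕ) → (Fin t → RV d) → RV d → ℝ)
    (t : ℕ) (ω : Seq d) : ℝ :=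
  ∑ j ∈ Finset.range t,
    (Real.log ((P.rnDeriv volume (ω j)).toReal) - Real.log (E j (fun i : Fin j => ω i) (ω j)))

/-- The Hellinger distance between two laws on `ℝ^d` (via their Lebesgue densities). -/
def hellinger (P Q : Measure (RV d)) : ℝ :=
  Real.sqrt ((1 / 2) *
    ∫ x, (Real.sqrt ((P.rnDeriv volume x).toReal) - Real.sqrt ((Q.rnDeriv volume x).toReal)) ^ 2)

/-- The Hellinger distance from `P` to the class of log-concave laws. -/
def dHLC (P : Measure (RV d)) : ℝ :=
  sInf {r | ∃ L ∈ logConcaveLaws d, r = hellinger d P L}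

/-- The Kullback–Leibler divergence. -/
def klDivR {α : Type*} [MeasurableSpace α] (P Q : Measure α) : EReal :=
  if P ≪ Q ∧ Integrable (fun x => Real.log ((P.rnDeriv Q x).toReal)) P
  then ((∫ x, Real.log ((P.rnDeriv Q x).toReal) ∂P : ℝ) : EReal) else ⊤

/-- Membership in `𝒟₁`. -/
def MemD1 (P : Measure (RV d)) : Prop :=
  IsProbabilityMeasure P ∧ P ≪ volume ∧
  Integrable (fun x => max 0 (Real.log ((P.rnDeriv volume x).toReal))) P ∧
  Integrable (fun x => Real.sqrt (∑ i, (x i) ^ 2)) P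

/-- The log-likelihood gap `σ_t(P)` between the true density and the log-concave maximum
likelihood. -/
def sigmaT (P : Measure (RV d)) (t : ℕ) (ω : Seq d) : ℝ :=
  (∑ j ∈ Finset.range t, Real.log ((P.rnDeriv volume (ω j)).toReal)) -
    ⨆ p : {p : RV d → ℝ // IsLogConcaveDensity d p},
      ∑ j ∈ Finset.range t, Real.log (p.1 (ω j))

/-- The mean vector of `P`. -/
def meanVec (P : Measure (RV d)) : RV d := fun i => ∫ x, x i ∂P

/-- `Δ_P = min_{‖v‖=1} E_P |⟨v, X − E_P X⟩|`. -/
def DeltaP (P : Measure (RV d)) : ℝ :=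
  sInf {r | ∃ v : RV d, (∑ i, (v i) ^ 2) = 1 ∧
    r = ∫ x, |∑ i, v i * (x i - meanVec d P i)| ∂P}

/-- The class `𝒟_{Box,Lip,B}`: laws with a `1`-Lipschitz density supported on `[-1,1]^d`
taking values in `[1/B, B]` there. -/
def DBoxLip (B : ℝ) : Set (Measure (RV d)) :=
  {P | IsProbabilityMeasure P ∧ ∃ p : RV d → ℝ, Measurable p ∧
    P = volume.withDensity (fun x => ENNReal.ofReal (p x)) ∧
    (∀ x, ¬ (∀ i, |x i| ≤ 1) → p x = 0) ∧
    (∀ x, (∀ i, |x i| ≤ 1) → 1 / B ≤ p x ∧ p x ≤ B) ∧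
    (∀ x y, (∀ i, |x i| ≤ 1) → (∀ i, |y i| ≤ 1) →
      |p x - p y| ≤ Real.sqrt (∑ i, (x i - y i) ^ 2))}



/-- Tonelli's theorem for a product of functions of separate coordinates. -/
theorem lintegral_pi_prod {E : Type*} [MeasurableSpace E] {n : ℕ} (μ : Fin n → Measure E)
    [∀ i, SigmaFinite (μ i)] {f : Fin n → E → ENNReal} (hf : ∀ i, Measurable (f i)) :
    ∫⁻ x, ∏ i, f i (x i) ∂(Measure.pi μ) = ∏ i, ∫⁻ x, f i x ∂(μ i) := by
  induction n with
  | zero => simp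
  | succ n ih =>
    have hprod : Measurable fun x : Fin n → E => ∏ i, f i.succ (x i) :=
      Finset.measurable_prod _ fun i _ => (hf i.succ).comp (measurable_pi_apply i)
    have h := (measurePreserving_piFinSuccAbove μ 0).symm.lintegral_comp_emb
      (MeasurableEquiv.measurableEmbedding _) fun x => ∏ i, f i (x i)
    rw [← h, Fin.prod_univ_succ, ← ih (fun i => μ i.succ) fun i => hf i.succ,
      ← lintegral_prod_mul (hf 0).aemeasurable hprod.aemeasurable]
    refine lintegral_congr fun z => ?_
    rw [Fin.prod_univ_succ]
    rfl

/-- A product of absolutely continuous measures has the product density. -/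
theorem pi_eq_withDensity_prod_rnDeriv {E : Type*} [MeasurableSpace E] {n : ℕ}
    (μ ν : Fin n → Measure E) [∀ i, SigmaFinite (μ i)] [∀ i, SigmaFinite (ν i)]
    (h : ∀ i, μ i ≪ ν i) :
    Measure.pi μ =
      (Measure.pi ν).withDensity fun x => ∏ i, (μ i).rnDeriv (ν i) (x i) := by
  refine Measure.pi_eq fun A hA => ?_
  rw [withDensity_apply _ (MeasurableSet.univ_pi hA),
    ← lintegral_indicator (MeasurableSet.univ_pi hA)]
  have hind : ∀ x : Fin n → E,
      (Set.univ.pi A).indicator (fun x => ∏ i, (μ i).rnDeriv (ν i) (x i)) x =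
        ∏ i, (A i).indicator ((μ i).rnDeriv (ν i)) (x i) := by
    intro x
    by_cases hx : x ∈ Set.univ.pi A
    · rw [Set.indicator_of_mem hx]
      exact Finset.prod_congr rfl fun i _ => (Set.indicator_of_mem (hx i trivial) _).symm
    · rw [Set.indicator_of_notMem hx]
      simp only [Set.mem_univ_pi, not_forall] at hx
      obtain ⟨i, hi⟩ := hx
      exact (Finset.prod_eq_zero (Finset.mem_univ i) (Set.indicator_of_notMem hi _)).symm
  simp_rw [hind]
  rw [lintegral_pi_prod ν fun i => (Measure.measurable_rnDeriv _ _).indicator (hA i)]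
  refine Finset.prod_congr rfl fun i _ => ?_
  rw [lintegral_indicator (hA i), Measure.setLIntegral_rnDeriv (h i)]

theorem pi_absolutelyContinuous {E : Type*} [MeasurableSpace E] {n : ℕ}
    (μ ν : Fin n → Measure E) [∀ i, SigmaFinite (μ i)] [∀ i, SigmaFinite (ν i)]
    (h : ∀ i, μ i ≪ ν i) : Measure.pi μ ≪ Measure.pi ν := by
  rw [pi_eq_withDensity_prod_rnDeriv μ ν h]
  exact withDensity_absolutelyContinuous _ _

/-- If `μ ≪ ν`, the density of `μ` vanishes wherever that of `ν` does. -/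
theorem ae_rnDeriv_eq_zero_of_absolutelyContinuous {E : Type*} [MeasurableSpace E]
    (μ ν γ : Measure E) [SigmaFinite μ] [SigmaFinite ν] [SigmaFinite γ]
    (hμν : μ ≪ ν) :
    ∀ᵐ x ∂γ, ν.rnDeriv γ x = 0 → μ.rnDeriv γ x = 0 := by
  filter_upwards [Measure.rnDeriv_mul_rnDeriv (κ := γ) hμν] with x hx h0
  rw [← hx, Pi.mul_apply, h0, mul_zero]

instance isProbabilityMeasure_stdGaussian : IsProbabilityMeasure (stdGaussian d) := by
  unfold stdGaussian
  infer_instance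

theorem volume_absolutelyContinuous_stdGaussian :
    (volume : Measure (RV d)) ≪ stdGaussian d :=
  pi_absolutelyContinuous (fun _ => volume) (fun _ => gaussianReal 0 1)
    fun _ => gaussianReal_absolutelyContinuous' 0 one_ne_zero

theorem measurable_prefixMap (t : ℕ) : Measurable (prefixMap d t) :=
  measurable_pi_lambda _ fun s => measurable_pi_apply (s : ℕ)

theorem measurable_prefixMap_F (t : ℕ) : Measurable[F d t] (prefixMap d t) := by
  refine @measurable_pi_lambda _ _ _ (F d t) _ _ fun s => ?_
  refine Measurable.mono (comap_measurable fun ω : Seq d => ω s) ?_ le_rfl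
  exact le_iSup₂_of_le (f := fun (i : ℕ) (_ : i ∈ Finset.range t) =>
    MeasurableSpace.comap (fun ω : Seq d => ω i) inferInstance)
    (s : ℕ) (Finset.mem_range.mpr s.2) le_rfl

variable {d}

theorem isProductLaw_stdGaussian {Γ : Measure (Seq d)} (hΓ : IsGamma d Γ) :
    IsProductLaw d Γ fun _ => stdGaussian d := hΓ

theorem IsProductLaw.prefixLaw_eq {μ : Measure (Seq d)} {Ps : ℕ → Measure (RV d)}
    (h : IsProductLaw d μ Ps) (hP : ∀ t, IsProbabilityMeasure (Ps t)) (t : ℕ) :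
    prefixLaw d μ t = Measure.pi fun s : Fin t => Ps s :=
  (Measure.pi_eq fun A hA => h.2 t A hA).symm

theorem exists_isProductLaw (Ps : ℕ → Measure (RV d)) (hP : ∀ t, IsProbabilityMeasure (Ps t)) :
    ∃ μ, IsProductLaw d μ Ps := by
  refine ⟨Measure.infinitePi Ps, inferInstance, fun t A hA => ?_⟩
  set B : ℕ → Set (RV d) := fun i => if hi : i < t then A ⟨i, hi⟩ else Set.univ with hB
  have hBA : ∀ s : Fin t, B s = A s := fun s => by simp [hB]
  have hpre : prefixMap d t ⁻¹' Set.univ.pi A = Set.pi (Finset.range t : Set ℕ) B := by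
    ext ω
    simp only [Set.mem_preimage, prefixMap, Set.mem_pi, Finset.coe_range, Set.mem_Iio]
    exact ⟨fun h i hi => by simpa [hB, hi] using h ⟨i, hi⟩,
      fun h s => by simpa [hBA s] using h s s.2⟩
  rw [prefixLaw, Measure.map_apply (measurable_prefixMap d t) (MeasurableSet.univ_pi hA), hpre,
    Measure.infinitePi_pi, Finset.prod_range]
  · simp_rw [hBA]
  · intro i hi
    have hit := Finset.mem_range.mp hi
    simpa [hB, hit] using hA ⟨i, hit⟩

/-- The density process of an independent-product law is the running product of the marginal
densities. -/
theorem IsProductLaw.Z_ae_eq {Γ μ : Measure (Seq d)} (hΓ : IsGamma d Γ)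
    {Ps : ℕ → Measure (RV d)} (h : IsProductLaw d μ Ps) (hP : ∀ t, IsProbabilityMeasure (Ps t))
    (hac : ∀ t, Ps t ≪ stdGaussian d) (t : ℕ) :
    Z d μ Γ t =ᵐ[Γ]
      fun ω => ∏ s ∈ Finset.range t, ((Ps s).rnDeriv (stdGaussian d) (ω s)).toReal := by
  have hΓt := (isProductLaw_stdGaussian hΓ).prefixLaw_eq (fun _ => inferInstance) t
  have hmeas : Measurable fun x : Fin t → RV d =>
      ∏ i : Fin t, (Ps i).rnDeriv (stdGaussian d) (x i) :=
    Finset.measurable_prod _ fun i _ =>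
      (Measure.measurable_rnDeriv _ _).comp (measurable_pi_apply i)
  have hrn := Measure.rnDeriv_withDensity (Measure.pi fun _ : Fin t => stdGaussian d) hmeas
  rw [← pi_eq_withDensity_prod_rnDeriv (fun i : Fin t => Ps i) (fun _ => stdGaussian d)
    fun i => hac i, ← h.prefixLaw_eq hP t, ← hΓt] at hrn
  filter_upwards [ae_of_ae_map (measurable_prefixMap d t).aemeasurable hrn] with ω hω
  rw [Z, hω, ENNReal.toReal_prod, Finset.prod_range]
  rfl

theorem IsProductLaw.locAC {Γ μ : Measure (Seq d)} (hΓ : IsGamma d Γ)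
    {Ps : ℕ → Measure (RV d)} (h : IsProductLaw d μ Ps) (hP : ∀ t, IsProbabilityMeasure (Ps t))
    (hac : ∀ t, Ps t ≪ stdGaussian d) : LocAC d μ Γ := fun t => by
  rw [h.prefixLaw_eq hP, (isProductLaw_stdGaussian hΓ).prefixLaw_eq (fun _ => inferInstance)]
  exact pi_absolutelyContinuous _ _ fun i => hac i

theorem IsGamma.ae_eval {Γ : Measure (Seq d)} (hΓ : IsGamma d Γ) {p : RV d → Prop}
    (hp : ∀ᵐ x ∂stdGaussian d, p x) (t : ℕ) : ∀ᵐ ω ∂Γ, p (ω t) := by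
  have hpi : ∀ᵐ x ∂prefixLaw d Γ (t + 1), p (x (Fin.last t)) := by
    rw [(isProductLaw_stdGaussian hΓ).prefixLaw_eq (fun _ => inferInstance)]
    exact (Measure.quasiMeasurePreserving_eval _ (Fin.last t)).ae hp
  exact ae_of_ae_map (measurable_prefixMap d (t + 1)).aemeasurable hpi

/-- Switching at time `s` from one independent-product law to another is a fork-convex
combination. -/
theorem isFCC_isProductLaw {Γ P Q R : Measure (Seq d)} (hΓ : IsGamma d Γ)
    {ps qs : ℕ → Measure (RV d)} (s : ℕ)
    (hp : ∀ t, IsProbabilityMeasure (ps t)) (hq : ∀ t, IsProbabilityMeasure (qs t))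
    (hpac : ∀ t, ps t ≪ stdGaussian d) (hqac : ∀ t, qs t ≪ stdGaussian d)
    (hpq : ∀ t, ps t ≪ qs t)
    (hP : IsProductLaw d P ps) (hQ : IsProductLaw d Q qs)
    (hR : IsProductLaw d R fun t => if t < s then ps t else qs t) :
    IsFCC d Γ P Q s (fun ω => if Z d Q Γ s ω = 0 then 1 else 0) R := by
  have hr : ∀ t, IsProbabilityMeasure (if t < s then ps t else qs t) := fun t => by
    split_ifs
    exacts [hp t, hq t]
  have hrac : ∀ t, (if t < s then ps t else qs t) ≪ stdGaussian d := fun t => by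
    split_ifs
    exacts [hpac t, hqac t]
  have hZ : Measurable[F d s] (Z d Q Γ s) :=
    ((Measure.measurable_rnDeriv _ _).ennreal_toReal).comp (measurable_prefixMap_F d s)
  refine ⟨hP.1, hQ.1, hP.locAC hΓ hp hpac, hQ.locAC hΓ hq hqac,
    Measurable.ite (hZ (measurableSet_singleton 0)) measurable_const measurable_const,
    fun ω => ?_, ?_, hR.1, hR.locAC hΓ hr hrac, fun t => ?_⟩
  · dsimp only
    split_ifs <;> simp
  · convert measure_empty (μ := Γ)
    ext ω
    simp only [Set.mem_ofPred_eq, Set.mem_empty_iff_false, iff_false, not_and]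
    intro h h0
    simp [h0] at h
  · have hzero : ∀ᵐ ω ∂Γ, ∀ j, (qs j).rnDeriv (stdGaussian d) (ω j) = 0 →
        (ps j).rnDeriv (stdGaussian d) (ω j) = 0 :=
      ae_all_iff.mpr fun j => hΓ.ae_eval
        (ae_rnDeriv_eq_zero_of_absolutelyContinuous _ _ _ (hpq j)) j
    have hfin : ∀ᵐ ω ∂Γ, ∀ j, (qs j).rnDeriv (stdGaussian d) (ω j) < ⊤ :=
      ae_all_iff.mpr fun j => hΓ.ae_eval (Measure.rnDeriv_lt_top _ _) j
    filter_upwards [hR.Z_ae_eq hΓ hr hrac t, hP.Z_ae_eq hΓ hp hpac t, hP.Z_ae_eq hΓ hp hpac s,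
      hQ.Z_ae_eq hΓ hq hqac t, hQ.Z_ae_eq hΓ hq hqac s, hzero, hfin]
      with ω hRt hPt hPs hQt hQs hzero hfin
    rw [hRt, hPt, hPs, hQt, hQs]
    split_ifs with hts h0
    · refine Finset.prod_congr rfl fun j hj => ?_
      rw [if_pos ((Finset.mem_range.mp hj).trans_le hts)]
    · obtain ⟨j, hj, hj0⟩ := Finset.prod_eq_zero_iff.mp h0
      have hpj := hzero j <| ((ENNReal.toReal_eq_zero_iff _).mp hj0).resolve_right (hfin j).ne
      have hjs := Finset.mem_range.mp hj
      have hjt : j ∈ Finset.range t := Finset.mem_range.mpr (by omega)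
      rw [Finset.prod_eq_zero hjt (by rw [if_pos hjs, hpj, ENNReal.toReal_zero]),
        Finset.prod_eq_zero hjt (by rw [hpj, ENNReal.toReal_zero])]
      simp
    · have hst : s ≤ t := by omega
      rw [← Finset.prod_range_mul_prod_Ico _ hst, ← Finset.prod_range_mul_prod_Ico
        (fun j => ((qs j).rnDeriv (stdGaussian d) (ω j)).toReal) hst]
      have hlow : ∏ j ∈ Finset.range s,
          ((if j < s then ps j else qs j).rnDeriv (stdGaussian d) (ω j)).toReal =
          ∏ j ∈ Finset.range s, ((ps j).rnDeriv (stdGaussian d) (ω j)).toReal :=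
        Finset.prod_congr rfl fun j hj => by rw [if_pos (Finset.mem_range.mp hj)]
      have hhigh : ∏ j ∈ Finset.Ico s t,
          ((if j < s then ps j else qs j).rnDeriv (stdGaussian d) (ω j)).toReal =
          ∏ j ∈ Finset.Ico s t, ((qs j).rnDeriv (stdGaussian d) (ω j)).toReal :=
        Finset.prod_congr rfl fun j hj => by
          rw [if_neg (not_lt.mpr (Finset.mem_Ico.mp hj).1)]
      rw [hlow, hhigh]
      field_simp
      ring

/-- Product laws whose marginals are constant from time `n` on lie in the fork-convex hull of the
i.i.d. laws. -/
theorem isProductLaw_min_mem_fconv {Γ : Measure (Seq d)} (hΓ : IsGamma d Γ)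
    {PP : Set (Measure (RV d))} (hprob : ∀ P ∈ PP, IsProbabilityMeasure P)
    (hac : ∀ P ∈ PP, P ≪ stdGaussian d) (hmac : ∀ P ∈ PP, ∀ Q ∈ PP, P ≪ Q)
    {Ps : ℕ → Measure (RV d)} (hPs : ∀ t, Ps t ∈ PP) (n : ℕ) {μ : Measure (Seq d)}
    (hμ : IsProductLaw d μ fun t => Ps (min t n)) :
    μ ∈ fconv d Γ (iidLaws d PP) := by
  rintro S ⟨hS, hfork⟩
  induction n generalizing μ with
  | zero =>
    simp only [Nat.min_zero] at hμ
    exact hS ⟨Ps 0, hPs 0, hμ⟩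
  | succ n ih =>
    have hp := fun t => hprob _ (hPs t)
    obtain ⟨P, hP⟩ := exists_isProductLaw (fun t => Ps (min t n)) fun t => hp _
    obtain ⟨Q, hQ⟩ := exists_isProductLaw (fun _ => Ps (n + 1)) fun t => hp _
    refine hfork P (ih hP) Q (hS ⟨Ps (n + 1), hPs _, hQ⟩) (n + 1) _ μ
      (isFCC_isProductLaw hΓ (n + 1) (fun t => hp _) (fun t => hp _) (fun t => hac _ (hPs _))
        (fun t => hac _ (hPs _)) (fun t => hmac _ (hPs _) _ (hPs _)) hP hQ ?_)
    convert hμ using 2 with t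
    split_ifs with ht
    · congr 1; omega
    · congr 1; omega

variable (d)

/-- For a mutually absolutely continuous family `PP` of laws with Lebesgue
densities, the closed fork-convex hull of the i.i.d. laws `PP^∞` contains all
independent-product laws over `PP`, which in turn contain `PP^∞`. -/
theorem statement5 (Γ : Measure (Seq d)) (hΓ : IsGamma d Γ)
    (PP : Set (Measure (RV d)))
    (hdens : ∀ P ∈ PP, IsProbabilityMeasure P ∧ P ≪ (volume : Measure (RV d)))
    (hmac : ∀ P ∈ PP, ∀ Q ∈ PP, P ≪ Q) :
    productLaws d PP ⊆ clfconv d Γ (iidLaws d PP) ∧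
    iidLaws d PP ⊆ productLaws d PP := by
  constructor
  · rintro μ ⟨Ps, hPs, hμ⟩
    have hprob : ∀ P ∈ PP, IsProbabilityMeasure P := fun P hP => (hdens P hP).1
    have hac : ∀ P ∈ PP, P ≪ stdGaussian d := fun P hP =>
      (hdens P hP).2.trans (volume_absolutelyContinuous_stdGaussian d)
    have hp := fun t => hprob _ (hPs t)
    choose Pn hPn using fun n => exists_isProductLaw (fun t => Ps (min t n)) fun t => hp _
    refine ⟨hμ.1, hμ.locAC hΓ hp fun t => hac _ (hPs t), Pn,
      fun n => isProductLaw_min_mem_fconv hΓ hprob hac hmac hPs n (hPn n), fun t => ?_⟩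
    refine tendsto_const_nhds.congr' ?_
    filter_upwards [eventually_ge_atTop t] with n hn
    have hpre : prefixLaw d (Pn n) t = prefixLaw d μ t := by
      rw [(hPn n).prefixLaw_eq fun t => hp _, hμ.prefixLaw_eq hp]
      congr 1
      funext s
      rw [min_eq_left (s.2.le.trans hn)]
    simp [Z, hpre]
  · rintro μ ⟨P, hP, hμ⟩
    exact ⟨fun _ => P, fun _ => hP, hμ⟩

end SeqTest
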